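/- (Z_p-Tucker lemma.) Let p be a prime number, n, m ≥ 1 integers, α ≤ m, and let λ : (Z_p ∪ {0})^n \ {(0,…,0)} → Z_p × [m], written λ(x) = (s(x), v(x)), be a Z_p-equivariant map satisfying: (i) for all x⁽¹⁾ ⊆ x⁽²⁾ in (Z_p ∪ {0})^n \ {(0,…,0)}, if v(x⁽¹⁾) = v(x⁽²⁾) ≤ α, then s(x⁽¹⁾) = s(x⁽²⁾); and (ii) for all chains x⁽¹⁾ ⊆ x⁽²⁾ ⊆ ⋯ ⊆ x⁽ᵖ⁾ in (Z_p ∪ {0})^n \ {(0,…,0)}, if v(x⁽¹⁾) = v(x⁽²⁾) = ⋯ = v(x⁽ᵖ⁾) ≥ α + 1, then the values s(x⁽¹⁾), …, s(x⁽ᵖ⁾) are not pairwise distinct. Then α + (m − α)(p − 1) ≥ n. -/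

import Mathlib

/-!
Suppose the inequality fails. In the order complex of the nonzero vectors, coning successively with
the `n` coordinate axes gives chains `c₀, …, cₙ₋₁` with `∂ cₖ₊₁ = Tₖ cₖ`, where the `Tₖ` alternate
between `ω - 1` and the norm `1 + ω + ⋯ + ω ^ (p - 1)`.

The labelling sends every ascending list of vectors to a list of labels with fewer than `p` signs
on each value of `v`. The group acts freely on the nonempty lists of this kind: the mean in `ZMod p`
of the signs on a chosen value is shifted by `1`. Hence an alternating cocycle `δ fₖ` on them with
`Tₖ₊₁ (δ fₖ) = 0` can be written as `Tₖ fₖ₊₁` with `fₖ₊₁` alternating, and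
`⟨δ fₖ₊₁, cₖ₊₁⟩ = ⟨fₖ₊₁, Tₖ cₖ⟩ = ⟨δ fₖ, cₖ⟩`. Starting from `⟨δ f₀, c₀⟩ = 1` this gives
`⟨δ fₙ₋₁, cₙ₋₁⟩ = 1`. But the alternating cochain `δ fₙ₋₁` vanishes on lists of `n` labels, because
at most `α + (m - α) * (p - 1) < n` of these are distinct.
-/

namespace ZpTucker

open Finset
open Set (EqOn MapsTo)

section Cochains

variable {R V W : Type*} [CommRing R]

/-- Ordered cochains of all degrees at once: a list of `k` vertices is an ordered simplex of
dimension `k - 1`, and `[]` is the augmentation. -/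
abbrev Cochain (R V : Type*) := List V → R

/-- The cochain `l ↦ f (a :: l)`, the link of `f` at the vertex `a`. -/
def link (a : V) : Module.End R (Cochain R V) :=
  LinearMap.funLeft R R (List.cons a)

/-- The cochain map induced by a map of vertices. -/
def pullback (φ : V → W) : Cochain R W →ₗ[R] Cochain R V :=
  LinearMap.funLeft R R (List.map φ)

/-- The augmented simplicial coboundary: the alternating sum over the faces of a simplex. -/
def coboundary : Module.End R (Cochain R V) :=
  LinearMap.pi fun l ↦ ∑ i ∈ range l.length, (-1 : R) ^ i • LinearMap.proj (l.eraseIdx i)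

/-- The simplicial homotopy between the identity and the map induced by `φ`: it cuts the prism
over `[x₀, …, xₖ]` into the simplices `[x₀, …, xᵢ, φ xᵢ, …, φ xₖ]`. -/
def prism (φ : V → V) : Module.End R (Cochain R V) :=
  LinearMap.pi fun l ↦ ∑ i ∈ range l.length,
    (-1 : R) ^ i • LinearMap.proj (l.take (i + 1) ++ (l.drop i).map φ)

@[simp] lemma link_apply (a : V) (f : Cochain R V) (l : List V) : link a f l = f (a :: l) := rfl

@[simp] lemma pullback_apply (φ : V → W) (f : Cochain R W) (l : List V) :
    pullback φ f l = f (l.map φ) := rfl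

lemma coboundary_apply (f : Cochain R V) (l : List V) :
    coboundary f l = ∑ i ∈ range l.length, (-1) ^ i * f (l.eraseIdx i) := by
  simp [coboundary]

lemma prism_apply (φ : V → V) (f : Cochain R V) (l : List V) :
    prism φ f l =
      ∑ i ∈ range l.length, (-1) ^ i * f (l.take (i + 1) ++ (l.drop i).map φ) := by
  simp [prism]

@[simp] lemma coboundary_nil (f : Cochain R V) : coboundary f [] = 0 := by
  simp [coboundary_apply]

@[simp] lemma prism_nil (φ : V → V) (f : Cochain R V) : prism φ f [] = 0 := by
  simp [prism_apply]

lemma coboundary_cons (f : Cochain R V) (a : V) (l : List V) :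
    coboundary f (a :: l) = f l - coboundary (link a f) l := by
  simp [coboundary_apply, sum_range_succ', pow_succ, sub_eq_neg_add]

lemma prism_cons (φ : V → V) (f : Cochain R V) (a : V) (l : List V) :
    prism φ f (a :: l) = f (a :: φ a :: l.map φ) - prism φ (link a f) l := by
  simp [prism_apply, sum_range_succ', pow_succ, sub_eq_neg_add]

lemma link_coboundary (f : Cochain R V) (a : V) :
    link a (coboundary f) = f - coboundary (link a f) :=
  funext fun l ↦ coboundary_cons f a l

lemma coboundary_coboundary (f : Cochain R V) : coboundary (coboundary f) = 0 := by
  funext l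
  induction l generalizing f with
  | nil => simp
  | cons a l ih => simp [coboundary_cons, link_coboundary, ih]

lemma coboundary_pullback (φ : V → W) (f : Cochain R W) :
    coboundary (pullback φ f) = pullback φ (coboundary f) := by
  funext l
  simp [coboundary_apply, List.eraseIdx_map]

lemma coboundary_eq_zero_of_sublist {f : Cochain R V} {l : List V}
    (hf : ∀ l', l'.Sublist l → f l' = 0) : coboundary f l = 0 := by
  rw [coboundary_apply]
  exact sum_eq_zero fun i _ ↦ by rw [hf _ (l.eraseIdx_sublist i), mul_zero]

lemma prism_coboundary (φ : V → V) (f : Cochain R V) :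
    prism φ (coboundary f) = pullback φ f - f - coboundary (prism φ f) := by
  funext l
  induction l generalizing f with
  | nil => simp
  | cons a l ih =>
    have hlink : link a (prism φ f) =
        pullback φ (link (φ a) (link a f)) - prism φ (link a f) :=
      funext fun l ↦ prism_cons φ f a l
    simp only [prism_cons, coboundary_cons, link_coboundary, hlink, map_sub, Pi.sub_apply, ih,
      coboundary_pullback, pullback_apply, link_apply, List.map_cons]
    ring

end Cochains

section CyclicDifferential

/-- The differentials of the `2`-periodic resolution of the cyclic group of order `p` with
generator `σ`: `σ - 1` in even degrees, the norm `1 + σ + ⋯ + σ ^ (p - 1)` in odd ones. -/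
def cyclicDifferential {A : Type*} [Ring A] (p : ℕ) (σ : A) (k : ℕ) : A :=
  if Even k then σ - 1 else ∑ i ∈ range p, σ ^ i

lemma cyclicDifferential_add_two {A : Type*} [Ring A] (p : ℕ) (σ : A) (k : ℕ) :
    cyclicDifferential p σ (k + 2) = cyclicDifferential p σ k := by
  simp [cyclicDifferential, Nat.even_add]

lemma cyclicDifferential_mul_succ {A : Type*} [Ring A] {p : ℕ} {σ : A} (hσ : σ ^ p = 1) (k : ℕ) :
    cyclicDifferential p σ k * cyclicDifferential p σ (k + 1) = 0 := by
  by_cases hk : Even k <;>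
    simp [cyclicDifferential, hk, Nat.even_add_one, mul_geom_sum, geom_sum_mul, hσ]

lemma map_cyclicDifferential {R M N : Type*} [Ring R] [AddCommGroup M] [AddCommGroup N]
    [Module R M] [Module R N] {σ : Module.End R M} {τ : Module.End R N} {L : M →ₗ[R] N}
    (h : ∀ x, L (σ x) = τ (L x)) (p k : ℕ) (x : M) :
    L (cyclicDifferential p σ k x) = cyclicDifferential p τ k (L x) := by
  have hpow (i : ℕ) (x : M) : L ((σ ^ i) x) = (τ ^ i) (L x) :=
    (LinearMap.congr_fun
      (Module.End.commute_pow_left_of_commute (LinearMap.ext fun x ↦ (h x).symm) i) x).symm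
  by_cases hk : Even k <;> simp [cyclicDifferential, hk, h, hpow, LinearMap.sum_apply]

variable {R V W : Type*} [CommRing R] (p : ℕ)

lemma pullback_pow_apply (g : V → V) (i : ℕ) (f : Cochain R V) (l : List V) :
    ((pullback g : Module.End R (Cochain R V)) ^ i) f l = f ((List.map g)^[i] l) := by
  induction i generalizing l with
  | zero => rfl
  | succ i ih =>
    rw [pow_succ', Module.End.mul_apply, pullback_apply, ih, Function.iterate_succ_apply]

lemma iterate_list_map (g : V → V) (i : ℕ) : (List.map g)^[i] = List.map g^[i] := by
  induction i with
  | zero => exact List.map_id_fun.symm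
  | succ i ih => rw [Function.iterate_succ, Function.iterate_succ, ih, List.map_comp_map]

/-- The differentials of the periodic resolution, with the generator of the cyclic group acting
on cochains by pullback along the self-map `g` of the vertices. -/
abbrev orbitDifferential (g : V → V) (k : ℕ) : Module.End R (Cochain R V) :=
  cyclicDifferential p (pullback g) k

variable {p} {g : V → V} {k : ℕ}

lemma orbitDifferential_apply_of_even (hk : Even k) (f : Cochain R V) (l : List V) :
    orbitDifferential p g k f l = f (l.map g) - f l := by
  simp [cyclicDifferential, hk]

lemma orbitDifferential_apply_of_odd (hk : ¬ Even k) (f : Cochain R V) (l : List V) :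
    orbitDifferential p g k f l = ∑ i ∈ range p, f ((List.map g)^[i] l) := by
  simp [cyclicDifferential, hk, LinearMap.sum_apply, pullback_pow_apply]

lemma orbitDifferential_one_single_nil [CharP R p] [DecidableEq V] :
    orbitDifferential p g 1 (Pi.single [] 1 : Cochain R V) = 0 := by
  funext l
  rw [orbitDifferential_apply_of_odd Nat.not_even_one]
  rcases eq_or_ne l [] with rfl | hl
  · simp [iterate_list_map]
  · simp [iterate_list_map, hl]

lemma coboundary_orbitDifferential (f : Cochain R V) :
    coboundary (orbitDifferential p g k f) = orbitDifferential p g k (coboundary f) :=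
  map_cyclicDifferential (coboundary_pullback g) p k f

lemma pullback_orbitDifferential {h : W → W} {φ : V → W} (hφ : ∀ x, φ (g x) = h (φ x))
    (f : Cochain R W) :
    pullback φ (orbitDifferential p h k f) = orbitDifferential p g k (pullback φ f) :=
  map_cyclicDifferential (fun f ↦ funext fun l ↦ by simp [Function.comp_def, hφ]) p k f

lemma orbitDifferential_orbitDifferential_succ (hg : g^[p] = id) (f : Cochain R V) :
    orbitDifferential p g k (orbitDifferential p g (k + 1) f) = 0 := by
  have hσ : (pullback g : Module.End R (Cochain R V)) ^ p = 1 := by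
    ext f l
    rw [pullback_pow_apply, iterate_list_map, hg, List.map_id]
    rfl
  exact LinearMap.congr_fun (cyclicDifferential_mul_succ hσ k) f

lemma eqOn_orbitDifferential_zero {X : Set (List V)} (hX : MapsTo (List.map g) X X)
    {f : Cochain R V} (hf : EqOn f 0 X) : EqOn (orbitDifferential p g k f) 0 X := by
  intro l hl
  by_cases hk : Even k
  · rw [orbitDifferential_apply_of_even hk, hf hl, hf (hX hl)]
    exact sub_self _
  · rw [orbitDifferential_apply_of_odd hk]
    exact sum_eq_zero fun i _ ↦ hf (hX.iterate i hl)

end CyclicDifferential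

section Cones

variable {R V W : Type*} [CommRing R]

/-- The cochain operator dual to coning off a chain with apex `e`, when `φ` moves the chain
within the star of `e`: the prism from the identity to `φ`, capped by the cone over the image. -/
def coneOperator (e : V) (φ : V → V) : Module.End R (Cochain R V) :=
  pullback φ ∘ₗ link e - prism φ

lemma coneOperator_apply (e : V) (φ : V → V) (f : Cochain R V) (l : List V) :
    coneOperator e φ f l = f (e :: l.map φ) - prism φ f l := rfl

lemma coneOperator_coboundary (e : V) (φ : V → V) (f : Cochain R V) :
    coneOperator e φ (coboundary f) = f - coboundary (coneOperator e φ f) := by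
  simp only [coneOperator, LinearMap.sub_apply, LinearMap.comp_apply, link_coboundary, map_sub,
    prism_coboundary, coboundary_pullback]
  abel

/-- Evaluation of cochains at a chain `cₖ` of dimension `k` with `∂ cₖ₊₁ = Tₖ cₖ`, where `Tₖ` is the
`k`-th differential of the periodic resolution: `c₀ = e₀`, and `cₖ₊₁` is the cone with apex `eₖ₊₁`
over `Tₖ cₖ`. It plays the role of the fundamental class of the `k`-skeleton of `EG`. -/
def evalSkeleton (p : ℕ) (g : V → V) (e : ℕ → V) (φ : ℕ → V → V) : ℕ → (Cochain R V →ₗ[R] R)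
  | 0 => LinearMap.proj [e 0]
  | k + 1 => evalSkeleton p g e φ k ∘ₗ orbitDifferential p g k ∘ₗ
      coneOperator (e (k + 1)) (φ (k + 1))

lemma evalSkeleton_succ_coboundary {p : ℕ} {g : V → V} (hg : g^[p] = id) (e : ℕ → V)
    (φ : ℕ → V → V) (k : ℕ) (f : Cochain R V) :
    evalSkeleton p g e φ (k + 1) (coboundary f) =
      evalSkeleton p g e φ k (orbitDifferential p g k f) := by
  induction k generalizing f with
  | zero =>
    simp only [evalSkeleton, LinearMap.comp_apply, coneOperator_coboundary, map_sub,
      ← coboundary_orbitDifferential, LinearMap.proj_apply, coboundary_cons]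
    simp [orbitDifferential_apply_of_even]
  | succ k ih =>
    rw [evalSkeleton, LinearMap.comp_apply, LinearMap.comp_apply, coneOperator_coboundary, map_sub,
      map_sub, ← coboundary_orbitDifferential, ih, orbitDifferential_orbitDifferential_succ hg,
      map_zero, sub_zero]

variable [Preorder V]

/-- The weakly ascending lists of length `k` with entries in `S`. -/
def chainsOn (S : Set V) (k : ℕ) : Set (List V) :=
  {l | l.length = k ∧ l.Pairwise (· ≤ ·) ∧ ∀ x ∈ l, x ∈ S}

lemma mapsTo_map_chainsOn {S : Set V} {g : V → V} (hg : Monotone g) (hS : MapsTo g S S) (k : ℕ) :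
    MapsTo (List.map g) (chainsOn S k) (chainsOn S k) := fun l ⟨hlen, hchain, hmem⟩ ↦
  ⟨by simpa using hlen, hchain.map g fun _ _ h ↦ hg h, by simpa using fun x hx ↦ hS (hmem x hx)⟩

/-- `S` contracts to `e` inside `S'` along `x ≤ φ x ≥ e`. -/
structure IsConeOver (S S' : Set V) (e : V) (φ : V → V) : Prop where
  subset : S ⊆ S'
  mapsTo : MapsTo φ S S'
  apex_mem : e ∈ S'
  monotoneOn : MonotoneOn φ S
  le_map : ∀ x ∈ S, x ≤ φ x
  apex_le_map : ∀ x ∈ S, e ≤ φ x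

namespace IsConeOver

variable {S S' : Set V} {e : V} {φ : V → V} {k : ℕ} {l : List V}

lemma map_mem_chainsOn (h : IsConeOver S S' e φ) (hl : l ∈ chainsOn S k) :
    l.map φ ∈ chainsOn S' k := by
  obtain ⟨hlen, hchain, hmem⟩ := hl
  refine ⟨by simpa using hlen, ?_, by simpa using fun x hx ↦ h.mapsTo (hmem x hx)⟩
  exact List.pairwise_map.2 <| hchain.imp_of_mem fun hx hy hxy ↦
    h.monotoneOn (hmem _ hx) (hmem _ hy) hxy

lemma apex_cons_map_mem_chainsOn (h : IsConeOver S S' e φ) (hl : l ∈ chainsOn S k) :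
    e :: l.map φ ∈ chainsOn S' (k + 1) := by
  obtain ⟨hlen, hchain, hmem⟩ := h.map_mem_chainsOn hl
  refine ⟨by simpa using hlen, List.pairwise_cons.2 ⟨?_, hchain⟩, ?_⟩
  · simpa using fun x hx ↦ h.apex_le_map x (hl.2.2 x hx)
  · simpa [h.apex_mem] using hmem

lemma take_append_map_drop_mem_chainsOn (h : IsConeOver S S' e φ) (hl : l ∈ chainsOn S k) {i : ℕ}
    (hi : i < l.length) : l.take (i + 1) ++ (l.drop i).map φ ∈ chainsOn S' (k + 1) := by
  obtain ⟨hlen, hchain, hmem⟩ := hl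
  obtain ⟨-, hmapChain, hmapMem⟩ := h.map_mem_chainsOn ⟨hlen, hchain, hmem⟩
  refine ⟨by rw [List.length_append, List.length_take, List.length_map, List.length_drop]; lia,
    List.pairwise_append.2 ⟨hchain.take, ?_, ?_⟩, ?_⟩
  · exact hmapChain.sublist ((l.drop_sublist i).map φ)
  · intro x hx y' hy'
    obtain ⟨y, hy, rfl⟩ := List.mem_map.1 hy'
    have hyS := hmem y (List.mem_of_mem_drop hy)
    obtain ⟨a, ha, rfl⟩ := List.mem_take_iff_getElem.1 hx
    obtain ⟨b, hb, rfl⟩ := List.mem_drop_iff_getElem.1 hy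
    have hxy : l[a] ≤ l[i + b] :=
      hchain.rel_get_of_le (a := ⟨a, by lia⟩) (b := ⟨i + b, by lia⟩) (Fin.mk_le_mk.2 (by lia))
    exact hxy.trans (h.le_map _ hyS)
  · intro x hx
    rcases List.mem_append.1 hx with hx | hx
    · exact h.subset (hmem x (List.mem_of_mem_take hx))
    · exact hmapMem x (((l.drop_sublist i).map φ).subset hx)

lemma eqOn_coneOperator_zero {R : Type*} [CommRing R] (h : IsConeOver S S' e φ)
    {f : Cochain R V} (hf : EqOn f 0 (chainsOn S' (k + 1))) :
    EqOn (coneOperator e φ f) 0 (chainsOn S k) := by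
  intro l hl
  rw [coneOperator_apply, hf (h.apex_cons_map_mem_chainsOn hl), prism_apply, sum_eq_zero]
  · exact sub_zero _
  · intro i hi
    rw [hf (h.take_append_map_drop_mem_chainsOn hl (mem_range.1 hi)), Pi.zero_apply, mul_zero]

end IsConeOver

lemma evalSkeleton_eq_zero {p n k : ℕ} {g : V → V} {e : ℕ → V} {φ : ℕ → V → V} {S : ℕ → Set V}
    (hg : Monotone g) (hS : ∀ k, MapsTo g (S k) (S k)) (he : e 0 ∈ S 0)
    (hcone : ∀ k, k + 1 < n → IsConeOver (S k) (S (k + 1)) (e (k + 1)) (φ (k + 1))) (hk : k < n)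
    {f : Cochain R V} (hf : EqOn f 0 (chainsOn (S k) (k + 1))) :
    evalSkeleton p g e φ k f = 0 := by
  induction k generalizing f with
  | zero => exact hf ⟨rfl, List.pairwise_singleton _ _, by simpa using he⟩
  | succ k ih =>
    exact ih (by lia) <| eqOn_orbitDifferential_zero (mapsTo_map_chainsOn hg (hS k) _) <|
      (hcone k hk).eqOn_coneOperator_zero hf

end Cones

section Alternating

variable {R V W : Type*} [CommRing R]

/-- Alternating cochains, in terms of adjacent vertices. -/
structure IsAlternating (f : Cochain R V) : Prop where
  eq_zero_of_adjacent_eq : ∀ u a t, f (u ++ a :: a :: t) = 0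
  swap_adjacent : ∀ u a b t, f (u ++ a :: b :: t) = -f (u ++ b :: a :: t)

namespace IsAlternating

variable {f : Cochain R V}

lemma link (hf : IsAlternating f) (a : V) : IsAlternating (link a f) :=
  ⟨fun u ↦ hf.1 (a :: u), fun u ↦ hf.2 (a :: u)⟩

lemma pullback {f : Cochain R W} (hf : IsAlternating f) (φ : V → W) :
    IsAlternating (pullback φ f) :=
  ⟨fun u a t ↦ by simp [hf.1], fun u a b t ↦ by simp [hf.2 _ (φ a) (φ b)]⟩

lemma coboundary (hf : IsAlternating f) : IsAlternating (coboundary f) := by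
  constructor
  · intro u a t
    induction u generalizing f with
    | nil =>
      have hfaces : ZpTucker.coboundary (ZpTucker.link a (ZpTucker.link a f)) t = 0 :=
        coboundary_eq_zero_of_sublist fun l _ ↦ hf.1 [] a l
      simp [coboundary_cons, hfaces]
    | cons c u ih => rw [List.cons_append, coboundary_cons, hf.1, ih (hf.link c), sub_zero]
  · intro u a b t
    induction u generalizing f with
    | nil =>
      have hfaces : ZpTucker.coboundary
          (ZpTucker.link b (ZpTucker.link a f) + ZpTucker.link a (ZpTucker.link b f)) t = 0 :=
        coboundary_eq_zero_of_sublist fun l _ ↦ add_eq_zero_iff_eq_neg.2 (hf.2 [] a b l)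
      rw [map_add, Pi.add_apply] at hfaces
      simp only [List.nil_append, coboundary_cons, link_apply]
      linear_combination hfaces
    | cons c u ih =>
      rw [List.cons_append, coboundary_cons, hf.2, ih (hf.link c), List.cons_append,
        coboundary_cons]
      ring

lemma cons_eq_zero_of_mem (hf : IsAlternating f) {a : V} {l : List V} (ha : a ∈ l) :
    f (a :: l) = 0 := by
  induction l generalizing f with
  | nil => simp at ha
  | cons b l ih =>
    rcases List.mem_cons.1 ha with rfl | ha
    · exact hf.1 [] a l
    · rw [show f (a :: b :: l) = -f (b :: a :: l) from hf.2 [] a b l, neg_eq_zero]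
      exact ih (hf.link b) ha

lemma eq_zero_of_not_nodup (hf : IsAlternating f) {l : List V} (hl : ¬ l.Nodup) : f l = 0 := by
  induction l generalizing f with
  | nil => simp at hl
  | cons a l ih =>
    by_cases ha : a ∈ l
    · exact hf.cons_eq_zero_of_mem ha
    · exact ih (hf.link a) fun h ↦ hl (List.nodup_cons.2 ⟨ha, h⟩)

end IsAlternating

end Alternating

section Primitive

variable {R V : Type*} [CommRing R] {p : ℕ} {g : V → V} {τ : List V → ZMod p} {k : ℕ}
  {f : Cochain R V} {X : Set (List V)}

/-- A solution `u` of `Tₖ u = f`, where `Tₖ` is the `k`-th differential of the periodic resolution,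
read off from a function `τ` with `τ (g l) = τ l + 1`. In even degrees it sums `f` backwards from
`τ = 0` along each orbit, and in odd degrees it restricts `f` to the section `τ = 0`. -/
def primitive (g : V → V) (τ : List V → ZMod p) (k : ℕ) (f : Cochain R V) : Cochain R V :=
  fun l ↦ if Even k then -∑ i ∈ range (-τ l).val, f ((List.map g)^[i] l)
    else if τ l = 0 then f l else 0

lemma sum_range_val_add_one [NeZero p] {M : Type*} [AddCommMonoid M] {F : ℕ → M}
    (hF : ∑ i ∈ range p, F i = 0) (t : ZMod p) :
    ∑ i ∈ range (t + 1).val, F i = ∑ i ∈ range (t.val + 1), F i := by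
  have hval : (t + 1).val = (t.val + 1) % p := by
    rw [← ZMod.val_natCast, Nat.cast_succ, ZMod.natCast_zmod_val]
  rcases (show t.val + 1 ≤ p from t.val_lt).lt_or_eq with hlt | heq
  · rw [hval, Nat.mod_eq_of_lt hlt]
  · rw [hval, heq, Nat.mod_self, hF, sum_range_zero]

lemma orbitDifferential_primitive_of_even [NeZero p]
    (hτ : ∀ l ∈ X, τ (l.map g) = τ l + 1) (hk : Even k)
    (hf : EqOn (orbitDifferential p g (k + 1) f) 0 X) :
    EqOn (orbitDifferential p g k (primitive g τ k f)) f X := by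
  intro l hl
  have hnorm : ∑ i ∈ range p, f ((List.map g)^[i] l) = 0 := by
    rw [← orbitDifferential_apply_of_odd (k := k + 1) (by simpa [Nat.even_add_one])]
    exact hf hl
  have hval := sum_range_val_add_one hnorm (-(τ l + 1))
  rw [show -(τ l + 1) + 1 = -τ l by ring, sum_range_succ'] at hval
  simp only [orbitDifferential_apply_of_even hk, primitive, if_pos hk, hτ l hl, hval,
    Function.iterate_succ_apply, Function.iterate_zero_apply]
  ring

lemma orbitDifferential_primitive_of_odd [NeZero p] (hX : MapsTo (List.map g) X X)
    (hτ : ∀ l ∈ X, τ (l.map g) = τ l + 1) (hk : ¬ Even k)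
    (hf : EqOn (orbitDifferential p g (k + 1) f) 0 X) :
    EqOn (orbitDifferential p g k (primitive g τ k f)) f X := by
  have hinv (l) (hl : l ∈ X) : f (l.map g) = f l := by
    rw [← sub_eq_zero, ← orbitDifferential_apply_of_even (k := k + 1) (Nat.even_add_one.2 hk)]
    exact hf hl
  have hiter (i : ℕ) (l) (hl : l ∈ X) :
      τ ((List.map g)^[i] l) = τ l + i ∧ f ((List.map g)^[i] l) = f l := by
    induction i generalizing l with
    | zero => simp
    | succ i ih =>
      obtain ⟨hτi, hfi⟩ := ih _ (hX hl)
      rw [Function.iterate_succ_apply]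
      exact ⟨by rw [hτi, hτ l hl]; push_cast; ring, hfi.trans (hinv l hl)⟩
  intro l hl
  have hval (i) (hi : i ∈ range p) : τ l + i = 0 ↔ i = (-τ l).val := by
    rw [add_comm, ← eq_neg_iff_add_eq_zero, ← (ZMod.val_injective p).eq_iff,
      ZMod.val_natCast_of_lt (mem_range.1 hi)]
  rw [orbitDifferential_apply_of_odd hk]
  calc ∑ i ∈ range p, primitive g τ k f ((List.map g)^[i] l)
      = ∑ i ∈ range p, if i = (-τ l).val then f l else 0 := sum_congr rfl fun i hi ↦ by
        simp only [primitive, if_neg hk, hiter i l hl, hval i hi]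
    _ = f l := by rw [sum_ite_eq', if_pos (mem_range.2 (ZMod.val_lt _))]

lemma IsAlternating.primitive (hf : IsAlternating f) (hτ : ∀ l l', l.Perm l' → τ l = τ l') :
    IsAlternating (primitive g τ k f) := by
  have hiter (i : ℕ) : IsAlternating fun l ↦ f ((List.map g)^[i] l) := by
    rw [iterate_list_map]
    exact hf.pullback g^[i]
  constructor
  · intro u a t
    simp [ZpTucker.primitive, hf.1, (hiter _).1]
  · intro u a b t
    have hab := hτ _ _ ((List.Perm.swap b a t).append_left u)
    simp only [ZpTucker.primitive, hab, hf.2 u a b, (hiter _).2 u a b, sum_neg_distrib]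
    split_ifs <;> simp

end Primitive

section Labels

variable {κ : Type*} {p : ℕ}

/-- The generator of `Z_p` acting on labels. -/
def rotateLabel (x : κ × ZMod p) : κ × ZMod p := (x.1, x.2 + 1)

variable [NeZero p] [DecidableEq κ]

/-- The elements of `Z_p` that occur in `l` together with the colour `k`. -/
def fiber (l : List (κ × ZMod p)) (k : κ) : Finset (ZMod p) := {a | (k, a) ∈ l}

lemma mem_fiber {l : List (κ × ZMod p)} {k : κ} {a : ZMod p} : a ∈ fiber l k ↔ (k, a) ∈ l := by
  simp [fiber]

lemma fiber_congr {l l' : List (κ × ZMod p)} (h : l.Perm l') : fiber l = fiber l' := by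
  ext k
  simp only [mem_fiber, h.mem_iff]

lemma fiber_map_rotateLabel (l : List (κ × ZMod p)) (k : κ) :
    fiber (l.map rotateLabel) k = (fiber l k).map (addRightEmbedding 1) := by
  ext
  simp [mem_fiber, rotateLabel]

/-- The simplices of the target complex: at most `cap k` vertices have colour `k`. -/
def admissible (cap : κ → ℕ) : Set (List (κ × ZMod p)) := {l | ∀ k, #(fiber l k) ≤ cap k}

variable {cap : κ → ℕ}

lemma mapsTo_map_rotateLabel_admissible :
    MapsTo (List.map rotateLabel) (admissible (p := p) cap) (admissible cap) := fun l hl k ↦ by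
  rw [fiber_map_rotateLabel, card_map]
  exact hl k

lemma mem_admissible_of_sublist {l l' : List (κ × ZMod p)} (hl : l ∈ admissible cap)
    (h : l'.Sublist l) : l' ∈ admissible cap := fun k ↦
  (card_le_card fun _ ha ↦ mem_fiber.2 (h.subset (mem_fiber.1 ha))).trans (hl k)

lemma length_le_sum_cap [Fintype κ] {l : List (κ × ZMod p)} (hl : l ∈ admissible cap)
    (hnodup : l.Nodup) : l.length ≤ ∑ k, cap k := by
  have hsigma : l.toFinset = (univ.sigma (fiber l)).map (Equiv.sigmaEquivProd _ _).toEmbedding := by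
    ext ⟨k, a⟩
    simp [mem_fiber]
  rw [← List.toFinset_card_of_nodup hnodup, hsigma, card_map, card_sigma]
  exact sum_le_sum fun k _ ↦ hl k

variable [Nonempty κ]

/-- An arbitrary colour occurring in `l`, depending only on the set of entries of `l`. -/
noncomputable def chosenColour (l : List (κ × ZMod p)) : κ :=
  Classical.epsilon fun k ↦ (fiber l k).Nonempty

end Labels

section Barycentre

variable {κ : Type*} [DecidableEq κ] [Nonempty κ] {p : ℕ} [Fact p.Prime] {cap : κ → ℕ}

/-- The mean of the elements of `Z_p` that occur in `l` with the chosen colour. The division in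
`ZMod p` is meaningful as long as fewer than `p` of them occur. -/
noncomputable def barycentre (l : List (κ × ZMod p)) : ZMod p :=
  (∑ a ∈ fiber l (chosenColour l), a) / #(fiber l (chosenColour l))

lemma barycentre_congr {l l' : List (κ × ZMod p)} (h : l.Perm l') :
    barycentre l = barycentre l' := by
  simp only [barycentre, chosenColour, fiber_congr h]

lemma barycentre_map_rotateLabel (hcap : ∀ k, cap k < p) {l : List (κ × ZMod p)}
    (hl : l ∈ admissible cap) (hne : l ≠ []) :
    barycentre (l.map rotateLabel) = barycentre l + 1 := by
  have hcolour : chosenColour (l.map rotateLabel) = chosenColour l := by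
    simp [chosenColour, fiber_map_rotateLabel]
  have hfiber : (fiber l (chosenColour l)).Nonempty := by
    obtain ⟨⟨k, a⟩, t, rfl⟩ := List.exists_cons_of_ne_nil hne
    exact Classical.epsilon_spec (p := fun k ↦ (fiber _ k).Nonempty)
      ⟨k, a, mem_fiber.2 List.mem_cons_self⟩
  have hcard : (#(fiber l (chosenColour l)) : ZMod p) ≠ 0 := by
    rw [Ne, ZMod.natCast_eq_zero_iff]
    exact Nat.not_dvd_of_pos_of_lt hfiber.card_pos ((hl _).trans_lt (hcap _))
  rw [barycentre, hcolour, fiber_map_rotateLabel, card_map, sum_map, barycentre]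
  simp only [addRightEmbedding_apply, sum_add_distrib, sum_const, nsmul_eq_mul, mul_one]
  rw [add_div, div_self hcard]

lemma exists_orbitDifferential_eqOn_admissible {R : Type*} [CommRing R] (hcap : ∀ k, cap k < p)
    (k : ℕ) {f : Cochain R (κ × ZMod p)} (hf : IsAlternating f) (hnil : f [] = 0)
    (hcycle : EqOn (orbitDifferential p rotateLabel (k + 1) f) 0 (admissible cap)) :
    ∃ u : Cochain R (κ × ZMod p), IsAlternating u ∧
      EqOn (orbitDifferential p rotateLabel k u) f (admissible cap) := by
  refine ⟨primitive rotateLabel barycentre k f, hf.primitive fun _ _ ↦ barycentre_congr, ?_⟩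
  intro l hl
  by_cases hne : l = []
  · subst hne
    rw [hnil]
    refine eqOn_orbitDifferential_zero (X := {[]}) (by simp [MapsTo]) ?_ rfl
    have hiter (i : ℕ) : (List.map (rotateLabel (κ := κ) (p := p)))^[i] [] = [] := by
      rw [iterate_list_map, List.map_nil]
    simp [EqOn, primitive, hiter, hnil]
  · have hX : MapsTo (List.map rotateLabel) (admissible (p := p) cap \ {[]})
        (admissible cap \ {[]}) := fun l hl ↦
      ⟨mapsTo_map_rotateLabel_admissible hl.1, by simpa using hl.2⟩
    have hτ (l) (hl : l ∈ admissible (p := p) cap \ {[]}) :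
        barycentre (l.map rotateLabel) = barycentre l + 1 :=
      barycentre_map_rotateLabel hcap hl.1 hl.2
    have hcycle' := hcycle.mono (Set.sdiff_subset (t := {[]}))
    by_cases hk : Even k
    · exact orbitDifferential_primitive_of_even hτ hk hcycle' ⟨hl, hne⟩
    · exact orbitDifferential_primitive_of_odd hX hτ hk hcycle' ⟨hl, hne⟩

end Barycentre

section Vectors

variable {p n : ℕ}

/-- The nonzero vectors of `(Z_p ∪ {0})ⁿ`. -/
abbrev NonzeroVector (p n : ℕ) := {x : Fin n → Option (ZMod p) // ∃ i, x i ≠ none}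

/-- The relation `x ⊆ y`. -/
instance : Preorder (NonzeroVector p n) where
  le x y := ∀ i a, x.1 i = some a → y.1 i = some a
  le_refl _ _ _ h := h
  le_trans _ _ _ hxy hyz i a h := hyz i a (hxy i a h)

/-- The generator of `Z_p` acting on vectors. -/
def rotateVector (x : NonzeroVector p n) : NonzeroVector p n :=
  ⟨fun i ↦ (x.1 i).map (· + 1), by simpa using x.2⟩

lemma rotateVector_monotone : Monotone (rotateVector (p := p) (n := n)) := by
  intro x y hxy i a ha
  obtain ⟨b, hb, rfl⟩ := Option.map_eq_some_iff.1 ha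
  exact Option.map_eq_some_iff.2 ⟨b, hxy i b hb, rfl⟩

lemma rotateVector_iterate : (rotateVector (p := p) (n := n))^[p] = id := by
  have hiter (j : ℕ) (x : NonzeroVector p n) (i : Fin n) :
      (rotateVector^[j] x).1 i = (x.1 i).map (· + (j : ZMod p)) := by
    induction j with
    | zero => simp
    | succ j ih =>
      simp [Function.iterate_succ_apply', rotateVector, ih, Function.comp_def, add_assoc]
  ext x i : 3
  simp [hiter]

/-- The vectors supported on the coordinates `0, …, k`. -/
def supportedUpTo (p n k : ℕ) : Set (NonzeroVector p n) := {x | ∀ i : Fin n, k < i → x.1 i = none}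

lemma mapsTo_rotateVector_supportedUpTo (k : ℕ) :
    MapsTo rotateVector (supportedUpTo p n k) (supportedUpTo p n k) := fun x hx i hi ↦ by
  simp [rotateVector, hx i hi]

variable [NeZero n]

/-- The vector whose only nonzero coordinate is `ω⁰`, in position `k` (modulo `n`). -/
def axisVector (p n : ℕ) [NeZero n] (k : ℕ) : NonzeroVector p n :=
  ⟨fun i ↦ if i = Fin.ofNat n k then some 0 else none, Fin.ofNat n k, by simp⟩

/-- Replaces the coordinate in position `k` (modulo `n`) by `ω⁰`. -/
def fillCoordinate (k : ℕ) (x : NonzeroVector p n) : NonzeroVector p n :=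
  ⟨fun i ↦ if i = Fin.ofNat n k then some 0 else x.1 i, Fin.ofNat n k, by simp⟩

lemma ne_ofNat_of_lt {k : ℕ} {i : Fin n} (hi : k < i) : i ≠ Fin.ofNat n k := by
  rintro rfl
  exact hi.not_ge (Nat.mod_le k n)

lemma axisVector_mem_supportedUpTo (k : ℕ) : axisVector p n k ∈ supportedUpTo p n k :=
  fun _ hi ↦ if_neg (ne_ofNat_of_lt hi)

lemma isConeOver_supportedUpTo {k : ℕ} (hk : k + 1 < n) :
    IsConeOver (supportedUpTo p n k) (supportedUpTo p n (k + 1)) (axisVector p n (k + 1))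
      (fillCoordinate (k + 1)) where
  subset _ hx i hi := hx i (by lia)
  mapsTo x hx i hi := (if_neg (ne_ofNat_of_lt hi)).trans (hx i (by lia))
  apex_mem := axisVector_mem_supportedUpTo _
  monotoneOn x _ y _ hxy i a := by
    simp only [fillCoordinate]
    split_ifs
    exacts [id, hxy i a]
  le_map x hx i a hi := by
    have hne : i ≠ Fin.ofNat n (k + 1) := by
      rintro rfl
      have hval : (Fin.ofNat n (k + 1)).val = k + 1 := Nat.mod_eq_of_lt hk
      have hzero := hx (Fin.ofNat n (k + 1)) (by rw [hval]; exact k.lt_succ_self)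
      exact Option.some_ne_none a (hi.symm.trans hzero)
    exact (if_neg hne).trans hi
  apex_le_map x _ i a := by
    simp only [axisVector, fillCoordinate]
    split_ifs <;> simp

end Vectors

section Degree

/-- Evaluation at the chain of dimension `k` built by coning along the coordinate axes. -/
abbrev evalVectors (p n k : ℕ) [NeZero n] :
    Cochain (ZMod p) (NonzeroVector p n) →ₗ[ZMod p] ZMod p :=
  evalSkeleton p rotateVector (axisVector p n) fillCoordinate k

variable {κ : Type*} [DecidableEq κ] {p n : ℕ} [NeZero n] {cap : κ → ℕ}
  {label : NonzeroVector p n → κ × ZMod p}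

lemma evalVectors_pullback_eq [NeZero p] {k : ℕ} (hk : k < n)
    (hadm : ∀ l : List (NonzeroVector p n), l.Pairwise (· ≤ ·) → l.map label ∈ admissible cap)
    {f f' : Cochain (ZMod p) (κ × ZMod p)}
    (hf : ∀ l ∈ admissible cap, l.length = k + 1 → f l = f' l) :
    evalVectors p n k (pullback label f) = evalVectors p n k (pullback label f') := by
  rw [← sub_eq_zero, ← map_sub]
  refine evalSkeleton_eq_zero rotateVector_monotone mapsTo_rotateVector_supportedUpTo
    (axisVector_mem_supportedUpTo 0) (fun _ ↦ isConeOver_supportedUpTo) hk ?_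
  intro l ⟨hlen, hchain, _⟩
  exact sub_eq_zero.2 <| hf _ (hadm l hchain) (by simpa using hlen)

lemma exists_alternating_evalVectors_eq_one [Nonempty κ] [Fact p.Prime] (hcap : ∀ k, cap k < p)
    (hlabel : ∀ x, label (rotateVector x) = rotateLabel (label x))
    (hadm : ∀ l : List (NonzeroVector p n), l.Pairwise (· ≤ ·) → l.map label ∈ admissible cap)
    {k : ℕ} (hk : k < n) :
    ∃ f : Cochain (ZMod p) (κ × ZMod p), IsAlternating f ∧
      EqOn (orbitDifferential p rotateLabel (k + 1) (coboundary f)) 0 (admissible cap) ∧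
      evalVectors p n k (pullback label (coboundary f)) = 1 := by
  induction k with
  | zero =>
    refine ⟨Pi.single [] 1, ⟨by simp, by simp⟩, ?_, ?_⟩
    · rw [zero_add, ← coboundary_orbitDifferential, orbitDifferential_one_single_nil, map_zero]
      exact fun _ _ ↦ rfl
    · simp [evalVectors, evalSkeleton, coboundary_cons]
  | succ k ih =>
    obtain ⟨f, hf, hcycle, heval⟩ := ih (by lia)
    obtain ⟨u, hu, hprim⟩ := exists_orbitDifferential_eqOn_admissible hcap k hf.coboundary
      (coboundary_nil f) hcycle
    refine ⟨u, hu, fun l hl ↦ ?_, ?_⟩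
    · have hfaces : coboundary (orbitDifferential p rotateLabel k u - coboundary f) l = 0 :=
        coboundary_eq_zero_of_sublist fun l' hl' ↦
          sub_eq_zero.2 (hprim (mem_admissible_of_sublist hl hl'))
      rw [map_sub, coboundary_coboundary, sub_zero, coboundary_orbitDifferential] at hfaces
      rwa [orbitDifferential, cyclicDifferential_add_two]
    · rw [← coboundary_pullback, evalVectors, evalSkeleton_succ_coboundary rotateVector_iterate,
        ← pullback_orbitDifferential hlabel, ← heval]
      exact evalVectors_pullback_eq (by lia) hadm fun l hl _ ↦ hprim hl

theorem le_sum_cap_of_equivariant_label [Fintype κ] [Fact p.Prime] (hcap : ∀ k, cap k < p)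
    (hlabel : ∀ x, label (rotateVector x) = rotateLabel (label x))
    (hadm : ∀ l : List (NonzeroVector p n), l.Pairwise (· ≤ ·) → l.map label ∈ admissible cap) :
    n ≤ ∑ k, cap k := by
  by_contra! hlt
  have : Nonempty κ := ⟨(label (axisVector p n 0)).1⟩
  have hn := NeZero.pos n
  obtain ⟨f, hf, -, heval⟩ :=
    exists_alternating_evalVectors_eq_one hcap hlabel hadm (Nat.sub_lt hn one_pos)
  refine zero_ne_one' (ZMod p) (Eq.trans ?_ heval)
  rw [evalVectors_pullback_eq (f' := 0) (by lia) hadm, map_zero, map_zero]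
  intro l hl hlen
  refine hf.coboundary.eq_zero_of_not_nodup fun hnodup ↦ ?_
  have := length_le_sum_cap hl hnodup
  lia

end Degree

section TuckerCap

lemma exists_monotone_injective_of_fiber {V κ : Type*} [Preorder V] [DecidableEq κ] {p : ℕ}
    [NeZero p] (label : V → κ × ZMod p) {l : List V} (hl : l.Pairwise (· ≤ ·)) (k : κ) :
    ∃ c : Fin #(fiber (l.map label) k) → V, Monotone c ∧ (∀ i, (label (c i)).1 = k) ∧
      Function.Injective fun i ↦ (label (c i)).2 := by
  have hocc (a : fiber (l.map label) k) : ∃ i, label (l.get i) = (k, a.1) := by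
    obtain ⟨x, hx, hxa⟩ := List.mem_map.1 (mem_fiber.1 a.2)
    obtain ⟨i, rfl⟩ := List.mem_iff_get.1 hx
    exact ⟨i, hxa⟩
  choose pos hpos using hocc
  have hinj : Function.Injective pos := fun a b hab ↦
    Subtype.ext (congrArg Prod.snd ((hpos a).symm.trans (hab ▸ hpos b)))
  have hcard : #(univ.map ⟨pos, hinj⟩) = #(fiber (l.map label) k) := by
    rw [card_map, univ_eq_attach, card_attach]
  let emb := (univ.map ⟨pos, hinj⟩).orderEmbOfFin hcard
  have hemb (i) : ∃ a, pos a = emb i := by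
    obtain ⟨a, -, ha⟩ := mem_map.1 (orderEmbOfFin_mem _ hcard i)
    exact ⟨a, ha⟩
  refine ⟨fun i ↦ l.get (emb i), fun i j hij ↦ hl.rel_get_of_le (emb.monotone hij),
    fun i ↦ ?_, fun i j hij ↦ emb.injective ?_⟩
  · obtain ⟨a, ha⟩ := hemb i
    simp only [← ha, hpos]
  · obtain ⟨a, ha⟩ := hemb i
    obtain ⟨b, hb⟩ := hemb j
    simp only [← ha, ← hb, hpos] at hij
    rw [← ha, ← hb, Subtype.ext hij]

/-- The greatest number of signs that can occur together with the value `k + 1 ∈ [m]` of `v` along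
a chain of vectors. -/
def tuckerCap (p α : ℕ) {m : ℕ} (k : Fin m) : ℕ := if k.val < α then 1 else p - 1

lemma tuckerCap_lt {p : ℕ} (hp : 1 < p) (α : ℕ) {m : ℕ} (k : Fin m) : tuckerCap p α k < p := by
  unfold tuckerCap
  split_ifs <;> lia

lemma sum_tuckerCap (p : ℕ) {m α : ℕ} (hα : α ≤ m) :
    ∑ k : Fin m, tuckerCap p α k = α + (m - α) * (p - 1) := by
  obtain ⟨d, rfl⟩ := Nat.exists_eq_add_of_le hα
  simp [tuckerCap, Fin.sum_univ_add]

lemma map_mem_admissible_tuckerCap {V : Type*} [Preorder V] {p m α : ℕ} [NeZero p]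
    {label : V → Fin m × ZMod p}
    (hlow : ∀ x y, x ≤ y → (label x).1 = (label y).1 → (label x).1 < α →
      (label x).2 = (label y).2)
    (hhigh : ∀ c : Fin p → V, Monotone c → (∀ i j, (label (c i)).1 = (label (c j)).1) →
      (∀ i, α ≤ (label (c i)).1) → ¬ Function.Injective fun i ↦ (label (c i)).2)
    {l : List V} (hl : l.Pairwise (· ≤ ·)) : l.map label ∈ admissible (tuckerCap p α) := by
  intro k
  obtain ⟨c, hmono, hcolour, hinj⟩ := exists_monotone_injective_of_fiber label hl k
  unfold tuckerCap
  split_ifs with hk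
  · by_contra! hcard
    have heq := hinj <| hlow (c ⟨0, by lia⟩) (c ⟨1, hcard⟩) (hmono (Fin.mk_le_mk.2 zero_le_one))
      (by simp only [hcolour]) (by rwa [hcolour])
    exact zero_ne_one (Fin.mk.inj heq)
  · refine Nat.le_sub_one_of_lt (lt_of_not_ge fun hcard ↦ ?_)
    let incl := Fin.castLE hcard
    exact hhigh (c ∘ incl) (hmono.comp (Fin.strictMono_castLE hcard).monotone)
      (fun i j ↦ by simp only [Function.comp_apply, hcolour])
      (fun i ↦ by simpa only [Function.comp_apply, hcolour] using not_lt.1 hk)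
      (hinj.comp (Fin.castLE_injective hcard))

end TuckerCap

end ZpTucker

/-- **The `Z_p`-Tucker lemma.** Here the cyclic group `Z_p` of `p`-th roots of unity is
encoded by `ZMod p` (with `j` corresponding to `ω^j`, the generator `ω` acting as `+1`),
a vector of `(Z_p ∪ {0})^n` is encoded as a map `Fin n → Option (ZMod p)` (`none` being
`0`), and the set `[m]` is encoded by `Fin m` (with `k ∈ Fin m` corresponding to
`k + 1 ∈ [m]`). The map `λ = (s, v)` is defined on the nonzero vectors; it is
`Z_p`-equivariant (`hequiv`), and satisfies the two hypotheses `h1` and `h2` about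
chains `x⁽¹⁾ ⊆ x⁽²⁾ ⊆ ⋯` (where `x ⊆ y` means `x i = some a → y i = some a`). Then
`α + (m − α)(p − 1) ≥ n`. -/
theorem zp_tucker_lemma (p n m α : ℕ) (hp : p.Prime) (hn : 1 ≤ n) (hm : 1 ≤ m)
    (hα : α ≤ m)
    (s : {x : Fin n → Option (ZMod p) // ∃ i, x i ≠ none} → ZMod p)
    (v : {x : Fin n → Option (ZMod p) // ∃ i, x i ≠ none} → Fin m)
    (hequiv : ∀ x y : {x : Fin n → Option (ZMod p) // ∃ i, x i ≠ none},
      (∀ i, y.1 i = (x.1 i).map (· + 1)) → s y = s x + 1 ∧ v y = v x)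
    (h1 : ∀ x y : {x : Fin n → Option (ZMod p) // ∃ i, x i ≠ none},
      (∀ i a, x.1 i = some a → y.1 i = some a) →
      v x = v y → (v x : ℕ) + 1 ≤ α → s x = s y)
    (h2 : ∀ c : Fin p → {x : Fin n → Option (ZMod p) // ∃ i, x i ≠ none},
      (∀ i j : Fin p, i ≤ j → ∀ k a, (c i).1 k = some a → (c j).1 k = some a) →
      (∀ i j : Fin p, v (c i) = v (c j)) →
      α + 1 ≤ (v (c ⟨0, hp.pos⟩) : ℕ) + 1 →
      ¬ Function.Injective fun i => s (c i)) :
    n ≤ α + (m - α) * (p - 1) := by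
  have : Fact p.Prime := ⟨hp⟩
  have : NeZero n := ⟨by lia⟩
  rw [← ZpTucker.sum_tuckerCap p hα]
  refine ZpTucker.le_sum_cap_of_equivariant_label (label := fun x ↦ (v x, s x))
    (ZpTucker.tuckerCap_lt hp.one_lt α) (fun x ↦ ?_)
    (fun l ↦ ZpTucker.map_mem_admissible_tuckerCap (fun x y hxy hv hvα ↦ h1 x y hxy hv hvα) ?_)
  · obtain ⟨hs, hv⟩ := hequiv x (ZpTucker.rotateVector x) fun _ ↦ rfl
    exact Prod.ext hv hs
  · exact fun c hmono hv hvα ↦ h2 c (fun _ _ hij ↦ hmono hij) hv (Nat.succ_le_succ (hvα _))
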